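/- Let k be an odd positive integer with k ≥ 3, i a positive integer with gcd(i,k) = 1, t a natural number with 0 ≤ t ≤ k−1, e = (2^i + 1)·2^t, F = GaloisField 2 k, and α ∈ F with α ≠ 0 and α ≠ 1. Define V : F × F → F × F by V(x,y) = ((αx + y)^e + x^e, (x + αy)^e + y^e), with components V₁, V₂, and for a, b, c, d ∈ F let W((a,b),(c,d)) = Σ_{x,y ∈ F} χ(Tr(c·V₁(x,y) + d·V₂(x,y) + a·x + b·y)). Then the maximum of |W((a,b),(c,d))| over all a, b ∈ F and (c,d) ≠ (0,0) equals 2^(k+1); equivalently, the nonlinearity of V, namely 2^(2k−1) − (1/2)·max |W|, equals 2^(2k−1) − 2^k. -/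

import Mathlib

noncomputable instance (k : ℕ) : Fintype (GaloisField 2 k) := Fintype.ofFinite _

/-- The absolute trace `Tr(x) = x + x^2 + ⋯ + x^(2^(k-1))` of `GaloisField 2 k`,
computed inside the field (its values lie in the prime subfield `{0, 1}`). -/
noncomputable def absTrace (k : ℕ) (x : GaloisField 2 k) : GaloisField 2 k :=
  ∑ j ∈ Finset.range k, x ^ 2 ^ j

/-- The Walsh transform `W((a,b),(c,d)) = Σ_{x,y} χ(Tr(c·V₁(x,y) + d·V₂(x,y) + ax + by))`
of the closed butterfly `V(x,y) = ((αx+y)^e + x^e, (x+αy)^e + y^e)`, where `χ(0) = 1`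
and `χ(1) = -1`. -/
noncomputable def butterflyWalsh (k e : ℕ) (α a b c d : GaloisField 2 k) : ℤ :=
  haveI := Classical.decEq (GaloisField 2 k)
  ∑ x : GaloisField 2 k, ∑ y : GaloisField 2 k,
    if absTrace k (c * ((α * x + y) ^ e + x ^ e) + d * ((x + α * y) ^ e + y ^ e)
        + a * x + b * y) = 0 then 1 else -1

/-!
Up to a power of the Frobenius, every component `c V₁ + d V₂` of the butterfly is a form
`Q(v) = σ(v)ᵀ M v` on `F²`, where `σ x = x ^ 2 ^ i` and `M` depends linearly on `(c, d)`. As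
`χ ∘ Tr ∘ Q` is quadratic over `𝔽₂`, each of its squared Walsh values is `0` or `|F|²` times the
cardinality of its radical `K = {u | M u = σ(Mᵀ σ(u))}`. Since `σ²` has only the fixed points `0`
and `1`, elements of `K` that are proportional over `F` are equal or zero, and two independent
elements `u`, `v` force `K = {0, u, v, u + v}`, provided that no `m ≠ 0` satisfies both `M m = 0`
and `Mᵀ σ(m) = 0`. Hence `|K| ≤ 4` and `|W| ≤ 2 |F|`.

The proviso holds for the butterfly: a singular `M` is proportional to a product of a column and
a row with entries explicit in `α`, `σ α` and a parameter `h`, and a common solution `m` would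
make `h` satisfy a `σ`-recurrence whose only solutions are `0` and `1`. Finally, for
`c = d = (α σ(α) + α + σ(α))⁻¹` the vector `(1, 1)` lies in `K`, so `2 ≤ |K| ≤ 4`. Some Walsh
value does not vanish, which makes `|K|` a perfect square, so `|K| = 4` and the bound is attained.
-/

open Matrix

section FixedPoints

variable {F : Type*} [Field F] {σ : F →+* F} {x : F}

theorem map_map_eq_self_of_mul_map_eq_one (h : x * σ x = 1) : σ (σ x) = x := by
  have hσx : σ x ≠ 0 := right_ne_zero_of_mul_eq_one h
  have hσ : σ x * σ (σ x) = 1 := by rw [← map_mul, h, map_one]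
  exact mul_left_cancel₀ hσx (by rw [hσ, mul_comm, h])

theorem map_map_eq_self_of_add_map_eq_one (h : x + σ x = 1) : σ (σ x) = x := by
  have hσ : σ x + σ (σ x) = 1 := by rw [← map_add, h, map_one]
  exact add_left_cancel (by rw [hσ, add_comm, h])

variable [CharP F 2]

theorem sq_add_self_eq_zero (h : x = 0 ∨ x = 1) : x ^ 2 + x = 0 := by
  rcases h with rfl | rfl <;> simp [CharTwo.add_self_eq_zero]

theorem ratio_eq_of_recurrence {x y z : F} (h : y + x * z = y ^ 2 * (x + z)) :
    (y + z) * (y + z + 1) * (x * y * (x * y + 1)) =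
      (x + y) * (x + y + 1) * (y * z * (y * z + 1)) := by
  grind only [CharTwo.two_eq_zero]

theorem add_one_mul_add_one_eq_one_or_eq_one {x y : F}
    (h : (x + y) * (x + y + 1) = x * y * (x * y + 1)) :
    (x + 1) * (y + 1) = 1 ∨ x = 1 ∨ y = 1 := by
  have factored : ((x + 1) * (y + 1) + 1) * ((x + 1) * (y + 1)) = 0 := by
    grind only [CharTwo.two_eq_zero]
  simpa only [mul_eq_zero, CharTwo.add_eq_zero] using factored

/- `(x + σ x)(x + σ x + 1) / (x σ x (x σ x + 1))` is fixed by `σ`, hence `0` or `1`. -/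
theorem eq_zero_or_one_of_recurrence (hσ : ∀ x, σ (σ x) = x → x = 0 ∨ x = 1)
    (h : σ x + x * σ (σ x) = σ x ^ 2 * (x + σ (σ x))) : x = 0 ∨ x = 1 := by
  rcases eq_or_ne x 0 with hx | hx
  · exact Or.inl hx
  rcases eq_or_ne (x * σ x) 1 with hprod | hprod
  · exact hσ x (map_map_eq_self_of_mul_map_eq_one hprod)
  set n := (x + σ x) * (x + σ x + 1) with hn
  set d := x * σ x * (x * σ x + 1) with hd
  have d_ne : d ≠ 0 :=
    mul_ne_zero (mul_ne_zero hx (by simpa using hx)) (by rwa [Ne, CharTwo.add_eq_zero])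
  have ratio_fixed : σ (n / d) = n / d := by
    rw [map_div₀, div_eq_div_iff (by simpa using d_ne) d_ne]
    simpa [hn, hd] using ratio_eq_of_recurrence h
  rcases hσ _ (by rw [ratio_fixed, ratio_fixed]) with hratio | hratio
  · rcases mul_eq_zero.1 ((div_eq_zero_iff.1 hratio).resolve_right d_ne) with hsum | hsum
    · have hfix : σ x = x := (CharTwo.add_eq_zero.1 hsum).symm
      exact hσ x (by rw [hfix, hfix])
    · exact hσ x (map_map_eq_self_of_add_map_eq_one (CharTwo.add_eq_zero.1 hsum))
  · rcases add_one_mul_add_one_eq_one_or_eq_one ((div_eq_one_iff_eq d_ne).1 hratio) with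
      hmul | hx1 | hσx1
    · have hσσ : σ (σ (x + 1)) = x + 1 :=
        map_map_eq_self_of_mul_map_eq_one (by rwa [map_add, map_one])
      exact hσ x (by simpa using hσσ)
    · exact Or.inr hx1
    · exact Or.inr ((map_eq_one_iff σ σ.injective).1 hσx1)

end FixedPoints

section QuadraticPhases

variable {V A : Type*} [AddCommGroup V] [Fintype V] [CommRing A] [IsDomain A]
  {f : V → A} {B : V → AddChar V A} {R : AddSubgroup V}

theorem sq_sum_eq_card_mul_sum_radical [Fintype R] (hf : ∀ v, f v ^ 2 = 1)
    (hB : ∀ u v, f (u + v) = f u * f v * B u v) (hR : ∀ u, u ∈ R ↔ B u = 1) :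
    (∑ v, f v) ^ 2 = Fintype.card V * ∑ u : R, f u := by
  classical
  calc (∑ v, f v) ^ 2
      = ∑ v, ∑ u, f (u + v) * f v := by
        rw [sq, Finset.sum_mul_sum, Finset.sum_comm]
        exact Finset.sum_congr rfl fun v _ ↦
          (Equiv.sum_comp (Equiv.addRight v) fun w ↦ f w * f v).symm
    _ = ∑ u, f u * ∑ v, B u v := by
        rw [Finset.sum_comm]
        refine Finset.sum_congr rfl fun u _ ↦ ?_
        rw [Finset.mul_sum]
        refine Finset.sum_congr rfl fun v _ ↦ ?_
        rw [hB]
        linear_combination f u * B u v * hf v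
    _ = ∑ u, if u ∈ R then Fintype.card V * f u else 0 := by
        refine Finset.sum_congr rfl fun u _ ↦ ?_
        simp only [AddChar.sum_eq_ite, ← AddChar.one_eq_zero, ← hR, mul_ite, mul_zero, mul_comm]
    _ = Fintype.card V * ∑ u : R, f u := by
        rw [Finset.mul_sum, ← Finset.sum_filter]
        exact Finset.sum_subtype _ (by simp) _

theorem sq_sum_eq_zero_or_eq_card_mul_card_radical (hf : ∀ v, f v ^ 2 = 1)
    (hB : ∀ u v, f (u + v) = f u * f v * B u v) (hR : ∀ u, u ∈ R ↔ B u = 1) :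
    (∑ v, f v) ^ 2 = 0 ∨ (∑ v, f v) ^ 2 = Fintype.card V * Nat.card R := by
  classical
  let fR : AddChar R A :=
    { toFun u := f u
      map_zero_eq_one' := by
        simpa only [add_zero, ← sq, hf, one_mul, AddChar.map_zero_eq_one, one_pow] using! hB 0 0
      map_add_eq_mul' u v := by
        simpa only [(hR u).1 u.2, AddChar.one_apply, mul_one] using! hB u v }
  have sum_fR : ∑ u : R, f u = if fR = 0 then (Fintype.card R : A) else 0 :=
    AddChar.sum_eq_ite fR
  rw [sq_sum_eq_card_mul_sum_radical hf hB hR, sum_fR, Nat.card_eq_fintype_card]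
  split_ifs
  · exact Or.inr rfl
  · exact Or.inl (mul_zero _)

end QuadraticPhases

section SemilinearMaps

variable {ι F : Type*} [Field F] (σ : F →+* F)

theorem ringHom_comp_add (u v : ι → F) : σ ∘ (u + v) = σ ∘ u + σ ∘ v :=
  funext fun i ↦ map_add σ (u i) (v i)

theorem ringHom_comp_smul (r : F) (u : ι → F) : σ ∘ (r • u) = σ r • (σ ∘ u) :=
  funext fun i ↦ map_mul σ r (u i)

theorem ringHom_comp_eq_zero_iff {u : ι → F} : σ ∘ u = 0 ↔ u = 0 := by
  simp only [funext_iff, Function.comp_apply, Pi.zero_apply, map_eq_zero]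

end SemilinearMaps

section SesquilinearForms

variable {ι F A : Type*} [Fintype ι] [Field F] [CommRing A]

/-- The form `v ↦ σ(v)ᵀ M v`. For `σ = (· ^ 2 ^ i)` its monomials are `v j ^ 2 ^ i * v l`, so it is
quadratic over `𝔽₂`. -/
def sesqForm (σ : F →+* F) (M : Matrix ι ι F) (v : ι → F) : F :=
  (σ ∘ v) ⬝ᵥ M *ᵥ v

/-- The additive endomorphism `u ↦ M u + σ(Mᵀ σ(u))`. When `ψ` is a `σ`-invariant additive
character, `ψ (sesqForm σ M (u + v) - sesqForm σ M u - sesqForm σ M v)` equals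
`ψ (sesqPolar σ M u ⬝ᵥ σ ∘ v)`, so its kernel is the radical of the quadratic form
`ψ ∘ sesqForm σ M`. -/
def sesqPolar (σ : F →+* F) (M : Matrix ι ι F) : (ι → F) →+ (ι → F) :=
  AddMonoidHom.mk' (fun u ↦ M *ᵥ u + σ ∘ ((σ ∘ u) ᵥ* M)) fun u v ↦ by
    rw [ringHom_comp_add, mulVec_add, add_vecMul, ringHom_comp_add, add_add_add_comm]

theorem sesqPolar_apply (σ : F →+* F) (M : Matrix ι ι F) (u : ι → F) :
    sesqPolar σ M u = M *ᵥ u + σ ∘ ((σ ∘ u) ᵥ* M) := rfl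

/-- The additive character `v ↦ ψ (w ⬝ᵥ v)`. -/
def dotChar (ψ : AddChar F A) (w : ι → F) : AddChar (ι → F) A where
  toFun v := ψ (w ⬝ᵥ v)
  map_zero_eq_one' := by rw [dotProduct_zero, AddChar.map_zero_eq_one]
  map_add_eq_mul' u v := by rw [dotProduct_add, AddChar.map_add_eq_mul]

theorem dotChar_apply (ψ : AddChar F A) (w v : ι → F) : dotChar ψ w v = ψ (w ⬝ᵥ v) := rfl

theorem dotChar_eq_one_iff {ψ : AddChar F A} (hψ : ψ.IsPrimitive) {w : ι → F} :
    dotChar ψ w = 1 ↔ w = 0 := by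
  classical
  refine ⟨fun h ↦ funext fun i ↦ by_contra fun hi ↦ hψ hi (DFunLike.ext _ _ fun x ↦ ?_), ?_⟩
  · simpa only [dotChar_apply, dotProduct_single, AddChar.one_apply, AddChar.mulShift_apply] using
      DFunLike.congr_fun h (Pi.single i x)
  · rintro rfl
    ext v
    rw [dotChar_apply, zero_dotProduct, AddChar.map_zero_eq_one, AddChar.one_apply]

theorem sq_apply_eq_one [CharP F 2] (ψ : AddChar F A) (x : F) : ψ x ^ 2 = 1 := by
  rw [sq, ← AddChar.map_add_eq_mul, CharTwo.add_self_eq_zero, AddChar.map_zero_eq_one]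

variable {ψ : AddChar F A} {σ : F →+* F} {M : Matrix ι ι F}

theorem apply_sesqForm_add (hψσ : ∀ x, ψ (σ x) = ψ x) (u v : ι → F) :
    ψ (sesqForm σ M (u + v)) =
      ψ (sesqForm σ M u) * ψ (sesqForm σ M v) * ψ (sesqPolar σ M u ⬝ᵥ σ ∘ v) := by
  have cross : ψ ((σ ∘ u) ⬝ᵥ M *ᵥ v) = ψ ((σ ∘ ((σ ∘ u) ᵥ* M)) ⬝ᵥ σ ∘ v) := by
    rw [← RingHom.map_dotProduct, hψσ, dotProduct_mulVec]
  simp only [sesqForm, sesqPolar_apply, ringHom_comp_add, mulVec_add, dotProduct_add,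
    add_dotProduct, AddChar.map_add_eq_mul, cross, dotProduct_comm (M *ᵥ u)]
  ring

variable [DecidableEq ι] [Fintype F]

/-- The Walsh transform at `a` of the Boolean function `ψ ∘ sesqForm σ M`. -/
def sesqWalsh (ψ : AddChar F A) (σ : F →+* F) (M : Matrix ι ι F) (a : ι → F) : A :=
  ∑ v : ι → F, ψ (sesqForm σ M v + a ⬝ᵥ v)

theorem sesqWalsh_sq [CharP F 2] [IsDomain A] (hψ : ψ.IsPrimitive) (hψσ : ∀ x, ψ (σ x) = ψ x)
    (a : ι → F) :
    sesqWalsh ψ σ M a ^ 2 = 0 ∨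
      sesqWalsh ψ σ M a ^ 2 =
        Fintype.card F ^ Fintype.card ι * Nat.card (sesqPolar σ M).ker := by
  classical
  let B (u : ι → F) : AddChar (ι → F) A :=
    (dotChar ψ (sesqPolar σ M u)).compAddMonoidHom (σ.toAddMonoidHom.compLeft ι)
  have surj : Function.Surjective (σ.toAddMonoidHom.compLeft ι) :=
    (Finite.surjective_of_injective σ.injective).comp_left
  have hB (u v : ι → F) : ψ (sesqForm σ M (u + v) + a ⬝ᵥ (u + v)) =
      ψ (sesqForm σ M u + a ⬝ᵥ u) * ψ (sesqForm σ M v + a ⬝ᵥ v) * B u v := by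
    have hBuv : B u v = ψ (sesqPolar σ M u ⬝ᵥ σ ∘ v) := rfl
    simp only [hBuv, dotProduct_add, AddChar.map_add_eq_mul, apply_sesqForm_add hψσ]
    ring
  have hR (u : ι → F) : u ∈ (sesqPolar σ M).ker ↔ B u = 1 := by
    rw [AddMonoidHom.mem_ker, ← dotChar_eq_one_iff hψ]
    exact ((AddChar.compAddMonoidHom_injective_left _ surj).eq_iff (b := 1)).symm
  rw [sesqWalsh, ← Nat.cast_pow, ← Fintype.card_fun]
  exact sq_sum_eq_zero_or_eq_card_mul_card_radical (fun v ↦ sq_apply_eq_one ψ _) hB hR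

theorem sum_sesqWalsh [IsDomain A] (hψ : ψ.IsPrimitive) :
    ∑ a, sesqWalsh ψ σ M a = (Fintype.card F : A) ^ Fintype.card ι := by
  classical
  calc ∑ a, sesqWalsh ψ σ M a
      = ∑ v, ψ (sesqForm σ M v) * ∑ a, dotChar ψ v a := by
        simp only [sesqWalsh, AddChar.map_add_eq_mul, Finset.mul_sum, dotChar_apply]
        rw [Finset.sum_comm]
        simp only [dotProduct_comm]
    _ = ∑ v : ι → F, if v = 0 then (Fintype.card F : A) ^ Fintype.card ι else 0 := by
        refine Finset.sum_congr rfl fun v _ ↦ ?_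
        simp only [AddChar.sum_eq_ite, ← AddChar.one_eq_zero, dotChar_eq_one_iff hψ]
        split_ifs with hv
        · simp [hv, sesqForm]
        · rw [mul_zero]
    _ = (Fintype.card F : A) ^ Fintype.card ι := by simp

end SesquilinearForms

section PolarKernel

variable {ι F : Type*} [Fintype ι] [Field F]

/-- The left and right radicals of the sesquilinear form `(u, v) ↦ σ(u)ᵀ M v` meet in `0`. For
such `M` the kernel of `sesqPolar σ M` is small. -/
def IsSesqNondegenerate (σ : F →+* F) (M : Matrix ι ι F) : Prop :=
  ∀ m : ι → F, M *ᵥ m = 0 → (σ ∘ m) ᵥ* M = 0 → m = 0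

variable {σ : F →+* F} {M : Matrix ι ι F} {u v : ι → F} [CharP F 2]

theorem mem_ker_sesqPolar : u ∈ (sesqPolar σ M).ker ↔ M *ᵥ u = σ ∘ ((σ ∘ u) ᵥ* M) := by
  simp only [AddMonoidHom.mem_ker, sesqPolar_apply, funext_iff, Pi.add_apply, Pi.zero_apply,
    CharTwo.add_eq_zero]

theorem mulVec_ne_zero_of_mem_ker (hM : IsSesqNondegenerate σ M) (hu : u ∈ (sesqPolar σ M).ker)
    (hu0 : u ≠ 0) : M *ᵥ u ≠ 0 := fun hMu ↦
  hu0 (hM u hMu ((ringHom_comp_eq_zero_iff σ).1 ((mem_ker_sesqPolar.1 hu).symm.trans hMu)))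

theorem mulVec_injective_of_span_ker_eq_top (hM : IsSesqNondegenerate σ M)
    (hspan : Submodule.span F ((sesqPolar σ M).ker : Set (ι → F)) = ⊤) :
    Function.Injective M.mulVec := by
  refine (injective_iff_map_eq_zero M.mulVecLin).2 fun m hm ↦ hM m hm (dotProduct_eq_zero _ ?_)
  intro w
  induction (hspan ▸ Submodule.mem_top : w ∈ Submodule.span F _) using
    Submodule.span_induction with
  | mem u hu =>
    rw [← dotProduct_mulVec, mem_ker_sesqPolar.1 hu, ← RingHom.map_dotProduct, dotProduct_comm,
      ← dotProduct_mulVec, show M *ᵥ m = 0 from hm, dotProduct_zero, map_zero]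
  | zero => exact dotProduct_zero _
  | add u v _ _ hu hv => rw [dotProduct_add, hu, hv, add_zero]
  | smul r u _ hu => rw [dotProduct_smul, hu, smul_zero]

theorem map_map_eq_self_of_smul_mem_ker (hM : IsSesqNondegenerate σ M)
    (hu : u ∈ (sesqPolar σ M).ker) (hu0 : u ≠ 0) {r : F} (hr : r • u ∈ (sesqPolar σ M).ker) :
    σ (σ r) = r := by
  have smul_eq : σ (σ r) • M *ᵥ u = r • M *ᵥ u := by
    rw [mem_ker_sesqPolar, mulVec_smul, ringHom_comp_smul, smul_vecMul, ringHom_comp_smul,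
      ← mem_ker_sesqPolar.1 hu] at hr
    exact hr.symm
  exact smul_left_injective F (mulVec_ne_zero_of_mem_ker hM hu hu0) smul_eq

theorem map_map_eq_self_of_add_smul_mem_ker (hM : Function.Injective M.mulVec)
    (hu : u ∈ (sesqPolar σ M).ker) (hv : v ∈ (sesqPolar σ M).ker)
    (huv : LinearIndependent F ![u, v]) {r s : F}
    (hrs : r • u + s • v ∈ (sesqPolar σ M).ker) : σ (σ r) = r ∧ σ (σ s) = s := by
  refine huv.eq_of_pair (hM ?_)
  rw [mem_ker_sesqPolar, ringHom_comp_add, add_vecMul, ringHom_comp_add] at hrs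
  simp only [ringHom_comp_smul, smul_vecMul, ← mem_ker_sesqPolar.1 hu, ← mem_ker_sesqPolar.1 hv,
    ← mulVec_smul, ← mulVec_add] at hrs
  exact hrs.symm

variable {M : Matrix (Fin 2) (Fin 2) F} {u v : Fin 2 → F}

theorem ker_sesqPolar_subset_of_linearIndependent (hM : IsSesqNondegenerate σ M)
    (hσ : ∀ x, σ (σ x) = x → x = 0 ∨ x = 1) (hu : u ∈ (sesqPolar σ M).ker)
    (hv : v ∈ (sesqPolar σ M).ker) (huv : LinearIndependent F ![u, v]) :
    ((sesqPolar σ M).ker : Set (Fin 2 → F)) ⊆ {0, u, v, u + v} := by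
  have hspan : Submodule.span F {u, v} = ⊤ := by
    rw [← range_cons_cons_empty u v ![]]
    exact huv.span_eq_top_of_card_eq_finrank' (by simp)
  have hinj := mulVec_injective_of_span_ker_eq_top hM
    (top_unique (hspan.ge.trans (Submodule.span_mono (Set.pair_subset hu hv))))
  intro w hw
  obtain ⟨r, s, rfl⟩ := Submodule.mem_span_pair.1 (hspan ▸ Submodule.mem_top (x := w))
  obtain ⟨hr, hs⟩ := map_map_eq_self_of_add_smul_mem_ker hinj hu hv huv hw
  rcases hσ r hr with rfl | rfl <;> rcases hσ s hs with rfl | rfl <;> simp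

theorem exists_ker_sesqPolar_subset (hM : IsSesqNondegenerate σ M)
    (hσ : ∀ x, σ (σ x) = x → x = 0 ∨ x = 1) :
    ∃ u v, ((sesqPolar σ M).ker : Set (Fin 2 → F)) ⊆ {0, u, v, u + v} := by
  by_cases hker : ∃ u ∈ (sesqPolar σ M).ker, u ≠ 0
  · obtain ⟨u, hu, hu0⟩ := hker
    by_cases hind : ∃ v ∈ (sesqPolar σ M).ker, LinearIndependent F ![u, v]
    · obtain ⟨v, hv, huv⟩ := hind
      exact ⟨u, v, ker_sesqPolar_subset_of_linearIndependent hM hσ hu hv huv⟩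
    · refine ⟨u, 0, fun w hw ↦ ?_⟩
      obtain ⟨r, rfl⟩ : ∃ r : F, r • u = w := by
        by_contra! hne
        exact hind ⟨w, hw, (LinearIndependent.pair_iff' hu0).2 hne⟩
      rcases hσ r (map_map_eq_self_of_smul_mem_ker hM hu hu0 hw) with rfl | rfl <;> simp
  · push Not at hker
    exact ⟨0, 0, fun w hw ↦ Or.inl (hker w hw)⟩

theorem card_ker_sesqPolar_le_four (hM : IsSesqNondegenerate σ M)
    (hσ : ∀ x, σ (σ x) = x → x = 0 ∨ x = 1) : Nat.card (sesqPolar σ M).ker ≤ 4 := by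
  classical
  obtain ⟨u, v, huv⟩ := exists_ker_sesqPolar_subset hM hσ
  calc Nat.card (sesqPolar σ M).ker
      ≤ (({0, u, v, u + v} : Finset (Fin 2 → F)) : Set (Fin 2 → F)).ncard :=
        Set.ncard_le_ncard (by simpa using huv) (Finset.finite_toSet _)
    _ ≤ 4 := (Set.ncard_coe_finset _).trans_le Finset.card_le_four

end PolarKernel

section PlaneWalshTransforms

variable {F : Type*} [Field F] [Fintype F] [CharP F 2] {ψ : AddChar F ℤ} {σ : F →+* F}
  {M : Matrix (Fin 2) (Fin 2) F}

theorem abs_sesqWalsh_le (hψ : ψ.IsPrimitive) (hψσ : ∀ x, ψ (σ x) = ψ x)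
    (hσ : ∀ x, σ (σ x) = x → x = 0 ∨ x = 1) (hM : IsSesqNondegenerate σ M) (a : Fin 2 → F) :
    |sesqWalsh ψ σ M a| ≤ 2 * Fintype.card F := by
  have hker : (Nat.card (sesqPolar σ M).ker : ℤ) ≤ 4 := mod_cast card_ker_sesqPolar_le_four hM hσ
  refine abs_le_of_sq_le_sq ?_ (by positivity)
  rcases sesqWalsh_sq hψ hψσ a with hW | hW
  · rw [hW]; positivity
  · rw [hW, Fintype.card_fin]
    nlinarith [sq_nonneg (Fintype.card F : ℤ)]

theorem exists_abs_sesqWalsh_eq (hψ : ψ.IsPrimitive) (hψσ : ∀ x, ψ (σ x) = ψ x)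
    (hσ : ∀ x, σ (σ x) = x → x = 0 ∨ x = 1) (hM : IsSesqNondegenerate σ M)
    (hker : (sesqPolar σ M).ker ≠ ⊥) :
    ∃ a, |sesqWalsh ψ σ M a| = 2 * Fintype.card F := by
  obtain ⟨a, -, ha⟩ : ∃ a ∈ Finset.univ, sesqWalsh ψ σ M a ≠ 0 :=
    Finset.exists_ne_zero_of_sum_ne_zero (by rw [sum_sesqWalsh hψ]; positivity)
  have hW : sesqWalsh ψ σ M a ^ 2 = Fintype.card F ^ 2 * Nat.card (sesqPolar σ M).ker :=
    (sesqWalsh_sq hψ hψσ a).resolve_left (pow_ne_zero 2 ha)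
  obtain ⟨w, hw⟩ : (Fintype.card F : ℤ) ∣ sesqWalsh ψ σ M a :=
    (Int.pow_dvd_pow_iff two_ne_zero).1 ⟨_, hW⟩
  have w_sq : w ^ 2 = Nat.card (sesqPolar σ M).ker := by
    rw [hw, mul_pow] at hW
    exact mul_left_cancel₀ (by positivity) hW
  have one_lt : (1 : ℤ) < Nat.card (sesqPolar σ M).ker :=
    mod_cast AddSubgroup.one_lt_card_iff_ne_bot _ |>.2 hker
  have le_four : (Nat.card (sesqPolar σ M).ker : ℤ) ≤ 4 :=
    mod_cast card_ker_sesqPolar_le_four hM hσ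
  have abs_w : |w| = 2 := by
    nlinarith [sq_abs w, abs_nonneg w]
  exact ⟨a, by rw [hw, abs_mul, abs_w, Nat.abs_cast, mul_comm]⟩

end PlaneWalshTransforms

section ButterflyMatrix

variable {F : Type*} [Field F]

/-- The matrix of the component `c V₁ + d V₂` of the butterfly with exponent map `x ↦ x * σ x`
and coefficient `α`, as a sesquilinear form in the two branches. -/
def butterflyMatrix (σ : F →+* F) (α c d : F) : Matrix (Fin 2) (Fin 2) F :=
  !![(α * σ α + 1) * c + d, σ α * c + α * d; α * c + σ α * d, c + (α * σ α + 1) * d]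

/-- Up to a scalar, a singular `butterflyMatrix σ α ((h + 1) ^ 2) (h ^ 2)` is the product of the
column `butterflyFactor (σ α) h` and the row `butterflyFactor α h`. -/
def butterflyFactor (x h : F) : Fin 2 → F :=
  ![x * (h + 1) ^ 2 + h, x * h ^ 2 + h + 1]

variable {σ : F →+* F} {α c d : F}

theorem sesqForm_butterflyMatrix (x y : F) : sesqForm σ (butterflyMatrix σ α c d) ![x, y] =
    c * ((α * x + y) * σ (α * x + y) + x * σ x) +
      d * ((x + α * y) * σ (x + α * y) + y * σ y) := by
  simp only [sesqForm, butterflyMatrix, dotProduct, mulVec, Fin.sum_univ_two, Function.comp_apply,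
    of_apply, cons_val', cons_val_zero, cons_val_one, cons_val_fin_one, map_add, map_mul]
  ring

theorem butterflyMatrix_mul (r : F) :
    butterflyMatrix σ α (r * c) (r * d) = r • butterflyMatrix σ α c d := by
  simp only [butterflyMatrix, smul_of, smul_cons, smul_eq_mul, smul_empty]
  ring_nf

theorem ringHom_comp_butterflyFactor (x h : F) :
    σ ∘ butterflyFactor x h = butterflyFactor (σ x) (σ h) := by
  ext i
  fin_cases i <;> simp [butterflyFactor]

theorem mul_map_add_add_ne_zero (hσ : ∀ x, σ (σ x) = x → x = 0 ∨ x = 1) (hα0 : α ≠ 0)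
    (hα1 : α ≠ 1) : α * σ α + α + σ α ≠ 0 := by
  intro hzero
  have hmul : (α + 1) * σ (α + 1) = 1 := by
    rw [map_add, map_one]
    linear_combination hzero
  have hα : σ (σ α) = α := by simpa using map_map_eq_self_of_mul_map_eq_one hmul
  exact (hσ α hα).elim hα0 hα1

variable [CharP F 2]

theorem det_butterflyMatrix : (butterflyMatrix σ α c d).det =
    (c + d) ^ 2 + (α * σ α + α + σ α) ^ 2 * (c * d) := by
  rw [butterflyMatrix, det_fin_two_of]
  grind only [CharTwo.two_eq_zero]

theorem smul_butterflyMatrix_eq_vecMulVec {h : F}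
    (hh : (α * σ α + α + σ α) * (h ^ 2 + h) = 1) :
    (h ^ 2 + h + 1) • butterflyMatrix σ α ((h + 1) ^ 2) (h ^ 2) =
      vecMulVec (butterflyFactor (σ α) h) (butterflyFactor α h) := by
  ext i j
  fin_cases i <;> fin_cases j <;>
    simp only [butterflyMatrix, butterflyFactor, vecMulVec_apply, Fin.zero_eta, Fin.mk_one,
      Matrix.smul_apply, of_apply, cons_val', cons_val_zero, cons_val_one, cons_val_fin_one,
      smul_eq_mul] <;>
    grind only [CharTwo.two_eq_zero]

theorem butterflyFactor_ne_zero {x : F} (hx : x ≠ 1) (h : F) : butterflyFactor x h ≠ 0 := by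
  intro hzero
  have h0 : x * (h + 1) ^ 2 + h = 0 := congrFun hzero 0
  have h1 : x * h ^ 2 + h + 1 = 0 := congrFun hzero 1
  exact hx (by grind only [CharTwo.two_eq_zero])

theorem det_butterflyFactor (x h h' : F) :
    (of ![butterflyFactor x h, butterflyFactor x h']).det =
      (x + 1) * ((h + h') * (x * (h + h') + 1)) := by
  rw [butterflyFactor, butterflyFactor, det_fin_two_of]
  grind only [CharTwo.two_eq_zero]

theorem exists_eq_mul_sq_of_det_butterflyMatrix_eq_zero [PerfectRing F 2]
    (hg : α * σ α + α + σ α ≠ 0) (hcd : (c, d) ≠ (0, 0))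
    (hdet : (butterflyMatrix σ α c d).det = 0) :
    ∃ r h, r ≠ 0 ∧ c = r * (h + 1) ^ 2 ∧ d = r * h ^ 2 ∧
      (α * σ α + α + σ α) * (h ^ 2 + h) = 1 := by
  set g := α * σ α + α + σ α
  rw [det_butterflyMatrix] at hdet
  have hr : c + d ≠ 0 := by
    intro hr
    obtain rfl : c = d := CharTwo.add_eq_zero.1 hr
    have hc : c = 0 := by simpa [hr, g, hg] using hdet
    exact hcd (by rw [hc])
  obtain ⟨h, hh⟩ := surjective_frobenius F 2 (d / (c + d))
  have hd : d = (c + d) * h ^ 2 := by rw [← frobenius_def, hh, mul_div_cancel₀ _ hr]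
  have hc : c = (c + d) * (h + 1) ^ 2 := by
    grind only [CharTwo.two_eq_zero]
  have hsq : (c + d) ^ 2 * (g * (h ^ 2 + h) + 1) ^ 2 = 0 := by
    rw [← hdet]
    grind only [CharTwo.two_eq_zero]
  refine ⟨c + d, h, hr, hc, hd, CharTwo.add_eq_zero.1 ?_⟩
  simpa [hr] using hsq

theorem map_mul_add_map_ne_one (hσ : ∀ x, σ (σ x) = x → x = 0 ∨ x = 1) {h : F}
    (hh : (α * σ α + α + σ α) * (h ^ 2 + h) = 1) : σ α * (h + σ h) ≠ 1 := by
  intro hs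
  have hr : σ (σ α) * (σ h + σ (σ h)) = 1 := by simpa using congrArg σ hs
  have hσh : (σ α * σ (σ α) + σ α + σ (σ α)) * (σ h ^ 2 + σ h) = 1 := by
    simpa using congrArg σ hh
  have recurrence : σ h + h * σ (σ h) = σ h ^ 2 * (h + σ (σ h)) := by
    grind only [CharTwo.two_eq_zero]
  exact right_ne_zero_of_mul_eq_one hh
    (sq_add_self_eq_zero (eq_zero_or_one_of_recurrence hσ recurrence))

theorem butterflyFactor_dotProduct_eq_zero_of_mulVec_eq_zero {h : F} {m : Fin 2 → F}
    (hα1 : α ≠ 1) (hh : (α * σ α + α + σ α) * (h ^ 2 + h) = 1)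
    (hm : butterflyMatrix σ α ((h + 1) ^ 2) (h ^ 2) *ᵥ m = 0) :
    butterflyFactor α h ⬝ᵥ m = 0 := by
  have hrank := congrArg (· *ᵥ m) (smul_butterflyMatrix_eq_vecMulVec hh)
  rw [smul_mulVec, hm, smul_zero, vecMulVec_mulVec, op_smul_eq_smul] at hrank
  refine (smul_eq_zero.1 hrank.symm).resolve_right (butterflyFactor_ne_zero ?_ h)
  rwa [Ne, map_eq_one_iff σ σ.injective]

theorem butterflyFactor_dotProduct_eq_zero_of_vecMul_eq_zero {h : F} {m : Fin 2 → F}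
    (hα1 : α ≠ 1) (hh : (α * σ α + α + σ α) * (h ^ 2 + h) = 1)
    (hm : m ᵥ* butterflyMatrix σ α ((h + 1) ^ 2) (h ^ 2) = 0) :
    butterflyFactor (σ α) h ⬝ᵥ m = 0 := by
  have hrank := congrArg (m ᵥ* ·) (smul_butterflyMatrix_eq_vecMulVec hh)
  rw [vecMul_smul, hm, smul_zero, vecMul_vecMulVec, dotProduct_comm] at hrank
  exact (smul_eq_zero.1 hrank.symm).resolve_right (butterflyFactor_ne_zero hα1 h)

theorem isSesqNondegenerate_butterflyMatrix [PerfectRing F 2]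
    (hσ : ∀ x, σ (σ x) = x → x = 0 ∨ x = 1) (hα0 : α ≠ 0) (hα1 : α ≠ 1)
    (hcd : (c, d) ≠ (0, 0)) : IsSesqNondegenerate σ (butterflyMatrix σ α c d) := by
  intro m hright hleft
  by_contra hm
  obtain ⟨r, h, hr, rfl, rfl, hh⟩ := exists_eq_mul_sq_of_det_butterflyMatrix_eq_zero
    (mul_map_add_add_ne_zero hσ hα0 hα1) hcd (exists_mulVec_eq_zero_iff.1 ⟨m, hm, hright⟩)
  rw [butterflyMatrix_mul, smul_mulVec, smul_eq_zero_iff_right hr] at hright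
  rw [butterflyMatrix_mul, vecMul_smul, smul_eq_zero_iff_right hr] at hleft
  have row_dot : butterflyFactor (σ α) (σ h) ⬝ᵥ σ ∘ m = 0 := by
    rw [← ringHom_comp_butterflyFactor, ← RingHom.map_dotProduct,
      butterflyFactor_dotProduct_eq_zero_of_mulVec_eq_zero hα1 hh hright, map_zero]
  have col_dot : butterflyFactor (σ α) h ⬝ᵥ σ ∘ m = 0 :=
    butterflyFactor_dotProduct_eq_zero_of_vecMul_eq_zero hα1 hh hleft
  have hdet : (of ![butterflyFactor (σ α) h, butterflyFactor (σ α) (σ h)]).det = 0 :=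
    exists_mulVec_eq_zero_iff.1 ⟨σ ∘ m, (ringHom_comp_eq_zero_iff σ).not.2 hm,
      funext (Fin.forall_fin_two.2 ⟨col_dot, row_dot⟩)⟩
  simp only [det_butterflyFactor, mul_eq_zero, CharTwo.add_eq_zero,
    map_eq_one_iff σ σ.injective, hα1, map_mul_add_map_ne_one hσ hh, false_or, or_false] at hdet
  exact right_ne_zero_of_mul_eq_one hh (sq_add_self_eq_zero (hσ h (by rw [← hdet, ← hdet])))

theorem ker_sesqPolar_butterflyMatrix_ne_bot (hc : (α * σ α + α + σ α) * c = 1) :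
    (sesqPolar σ (butterflyMatrix σ α c c)).ker ≠ ⊥ := by
  have fixed : butterflyMatrix σ α c c *ᵥ 1 = 1 ∧ 1 ᵥ* butterflyMatrix σ α c c = 1 := by
    constructor <;> ext i <;> fin_cases i <;>
      simp only [butterflyMatrix, mulVec, vecMul, dotProduct, Fin.sum_univ_two, Fin.zero_eta,
        Fin.mk_one, of_apply, cons_val', cons_val_zero, cons_val_one, cons_val_fin_one,
        Pi.one_apply, mul_one, one_mul] <;>
      grind only [CharTwo.two_eq_zero]
  have comp_one : σ ∘ (1 : Fin 2 → F) = 1 := funext fun _ ↦ map_one σ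
  have one_mem : 1 ∈ (sesqPolar σ (butterflyMatrix σ α c c)).ker := by
    rw [mem_ker_sesqPolar, comp_one, fixed.1, fixed.2, comp_one]
  intro hbot
  rw [hbot, AddSubgroup.mem_bot] at one_mem
  exact one_ne_zero one_mem

end ButterflyMatrix

section TraceCharacter

variable (F : Type*) [Field F] [Algebra (ZMod 2) F]

/-- The additive character `x ↦ χ (Tr x)` of a finite field of characteristic `2`, with
`χ 0 = 1` and `χ 1 = -1`. -/
noncomputable def traceChar : AddChar F ℤ :=
  (AddChar.zmodChar 2 (ζ := (-1 : ℤ)) (by norm_num)).compAddMonoidHom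
    (Algebra.trace (ZMod 2) F).toAddMonoidHom

variable {F}

theorem traceChar_eq_ite (x : F) :
    traceChar F x = if Algebra.trace (ZMod 2) F x = 0 then 1 else -1 := by
  have zmodChar_eq_ite (z : ZMod 2) : AddChar.zmodChar 2 (ζ := (-1 : ℤ)) (by norm_num) z =
      if z = 0 then 1 else -1 := by
    rw [AddChar.zmodChar_apply]
    fin_cases z <;> rfl
  exact zmodChar_eq_ite _

variable [Finite F]

theorem traceChar_isPrimitive : (traceChar F).IsPrimitive := by
  refine AddChar.IsPrimitive.of_ne_one fun hone ↦ ?_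
  obtain ⟨x, hx⟩ := Algebra.trace_surjective (ZMod 2) F 1
  have hx' := DFunLike.congr_fun hone x
  rw [traceChar_eq_ite, hx] at hx'
  simp at hx'

theorem traceChar_pow_two_pow (x : F) (j : ℕ) : traceChar F (x ^ 2 ^ j) = traceChar F x := by
  have htrace : Algebra.trace (ZMod 2) F (x ^ 2 ^ j) = Algebra.trace (ZMod 2) F x := by
    have h := Algebra.trace_eq_of_algEquiv
      (FiniteField.frobeniusAlgEquivOfAlgebraic (ZMod 2) F ^ j) x
    simpa [AlgEquiv.coe_pow, FiniteField.coe_frobeniusAlgEquivOfAlgebraic_iterate] using h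
  rw [traceChar_eq_ite, traceChar_eq_ite, htrace]

end TraceCharacter

theorem pow_eq_self_of_coprime {G : Type*} [Monoid G] {p j k : ℕ} (hjk : j.Coprime k) {x : G}
    (hj : x ^ p ^ j = x) (hk : x ^ p ^ k = x) : x ^ p = x := by
  have periodic {n : ℕ} (hn : x ^ p ^ n = x) : Function.IsPeriodicPt (· ^ p) n x := by
    rwa [Function.IsPeriodicPt, pow_iterate]
  simpa [hjk.gcd_eq_one] using! (periodic hj).gcd (periodic hk)

section GaloisField

variable {k : ℕ}

theorem iterateFrobenius_fixed (hk : Odd k) {i : ℕ} (hik : i.Coprime k) (x : GaloisField 2 k)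
    (hx : iterateFrobenius _ 2 i (iterateFrobenius _ 2 i x) = x) : x = 0 ∨ x = 1 := by
  have hcoprime : (i + i).Coprime k := by
    rw [← two_mul]
    exact (Nat.coprime_two_left.2 hk).mul_left hik
  have hfield : x ^ 2 ^ k = x := by
    rw [← GaloisField.card 2 k hk.pos.ne', Nat.card_eq_fintype_card, FiniteField.pow_card]
  rw [← iterateFrobenius_add_apply, iterateFrobenius_def] at hx
  have hsq : x ^ 2 = x := pow_eq_self_of_coprime hcoprime hx hfield
  exact (IsIdempotentElem.iff_eq_zero_or_one).1 ((sq x).symm.trans hsq)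

theorem absTrace_eq_algebraMap_trace (hk : k ≠ 0) (x : GaloisField 2 k) :
    absTrace k x = algebraMap (ZMod 2) _ (Algebra.trace (ZMod 2) _ x) := by
  rw [FiniteField.algebraMap_trace_eq_sum_pow, GaloisField.finrank 2 hk, Nat.card_zmod, absTrace]

open Classical in
theorem ite_absTrace_eq_traceChar (hk : k ≠ 0) (x : GaloisField 2 k) :
    (if absTrace k x = 0 then 1 else -1) = traceChar _ x := by
  simp only [traceChar_eq_ite, absTrace_eq_algebraMap_trace hk, map_eq_zero]

theorem butterflyWalsh_eq_sesqWalsh (hk : k ≠ 0) (i t : ℕ) (α a b c d : GaloisField 2 k) :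
    butterflyWalsh k ((2 ^ i + 1) * 2 ^ t) α a b (c ^ 2 ^ t) (d ^ 2 ^ t) =
      sesqWalsh (traceChar _) (iterateFrobenius _ 2 i)
        (butterflyMatrix (iterateFrobenius _ 2 i) α c d) ![a, b] := by
  have hpow (z : GaloisField 2 k) :
      z ^ ((2 ^ i + 1) * 2 ^ t) = (z * iterateFrobenius _ 2 i z) ^ 2 ^ t := by
    rw [iterateFrobenius_def, pow_mul, ← pow_succ']
  rw [butterflyWalsh, sesqWalsh, ← (finTwoArrowEquiv _).symm.sum_comp, Fintype.sum_prod_type]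
  refine Finset.sum_congr rfl fun x _ ↦ Finset.sum_congr rfl fun y _ ↦ ?_
  have hform : sesqForm (iterateFrobenius _ 2 i) (butterflyMatrix (iterateFrobenius _ 2 i) α c d)
      ((finTwoArrowEquiv _).symm (x, y)) = _ := sesqForm_butterflyMatrix x y
  have hdot : ![a, b] ⬝ᵥ (finTwoArrowEquiv _).symm (x, y) = a * x + b * y := vec2_dotProduct' ..
  rw [ite_absTrace_eq_traceChar hk, hform, hdot, add_assoc _ (a * x)]
  simp only [hpow, ← add_pow_char_pow, ← mul_pow, AddChar.map_add_eq_mul _ _ (a * x + b * y),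
    traceChar_pow_two_pow]

theorem card_galoisField_two (hk : k ≠ 0) : (Fintype.card (GaloisField 2 k) : ℤ) = 2 ^ k := by
  rw [← Nat.card_eq_fintype_card, GaloisField.card 2 k hk, Nat.cast_pow, Nat.cast_ofNat]

variable {i : ℕ} (t : ℕ) {α : GaloisField 2 k}

theorem abs_butterflyWalsh_le (hk : Odd k) (hik : i.Coprime k) (hα0 : α ≠ 0) (hα1 : α ≠ 1)
    {c d : GaloisField 2 k} (hcd : (c, d) ≠ (0, 0)) (a b : GaloisField 2 k) :
    |butterflyWalsh k ((2 ^ i + 1) * 2 ^ t) α a b c d| ≤ 2 ^ (k + 1) := by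
  have hσ := iterateFrobenius_fixed hk hik
  obtain ⟨c, rfl⟩ := (bijective_iterateFrobenius _ 2 t).2 c
  obtain ⟨d, rfl⟩ := (bijective_iterateFrobenius _ 2 t).2 d
  replace hcd : (c, d) ≠ (0, 0) := by simpa using hcd
  rw [iterateFrobenius_def, iterateFrobenius_def, butterflyWalsh_eq_sesqWalsh hk.pos.ne',
    pow_succ', ← card_galoisField_two hk.pos.ne']
  exact abs_sesqWalsh_le traceChar_isPrimitive (traceChar_pow_two_pow · i) hσ
    (isSesqNondegenerate_butterflyMatrix hσ hα0 hα1 hcd) _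

theorem exists_abs_butterflyWalsh_eq (hk : Odd k) (hik : i.Coprime k) (hα0 : α ≠ 0)
    (hα1 : α ≠ 1) : ∃ a b c d : GaloisField 2 k, (c, d) ≠ (0, 0) ∧
      |butterflyWalsh k ((2 ^ i + 1) * 2 ^ t) α a b c d| = 2 ^ (k + 1) := by
  have hσ := iterateFrobenius_fixed hk hik
  obtain ⟨c, hc⟩ := (mul_map_add_add_ne_zero hσ hα0 hα1).isUnit.exists_right_inv
  have hcc : (c, c) ≠ (0, 0) := by simpa using right_ne_zero_of_mul_eq_one hc
  obtain ⟨a, ha⟩ := exists_abs_sesqWalsh_eq traceChar_isPrimitive (traceChar_pow_two_pow · i) hσ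
    (isSesqNondegenerate_butterflyMatrix hσ hα0 hα1 hcc) (ker_sesqPolar_butterflyMatrix_ne_bot hc)
  refine ⟨a 0, a 1, c ^ 2 ^ t, c ^ 2 ^ t, by simpa using hcc, ?_⟩
  rw [butterflyWalsh_eq_sesqWalsh hk.pos.ne', show ![a 0, a 1] = a from FinVec.etaExpand_eq a, ha,
    pow_succ', card_galoisField_two hk.pos.ne']

end GaloisField

/-- Theorem 3.7 (nonlinearity): for `k ≥ 3` odd, `gcd(i,k) = 1`, exponent
`e = (2^i+1)·2^t` and coefficient `α ≠ 0, 1`, the maximum of `|W((a,b),(c,d))|` over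
all `a, b` and `(c,d) ≠ (0,0)` equals `2^(k+1)`; equivalently the nonlinearity of the
closed butterfly is `2^(2k-1) - 2^k`. -/
theorem closedButterfly_nonlinearity (k i t : ℕ) (hk : Odd k) (hk3 : 3 ≤ k)
    (hipos : 0 < i) (hgcd : Nat.gcd i k = 1) (ht : t ≤ k - 1)
    (α : GaloisField 2 k) (hα0 : α ≠ 0) (hα1 : α ≠ 1) :
    IsGreatest {m : ℤ | ∃ a b c d : GaloisField 2 k, (c, d) ≠ (0, 0) ∧
        m = |butterflyWalsh k ((2 ^ i + 1) * 2 ^ t) α a b c d|} (2 ^ (k + 1)) ∧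
    (2 : ℤ) ^ (2 * k - 1) - (2 ^ (k + 1)) / 2 = 2 ^ (2 * k - 1) - 2 ^ k := by
  refine ⟨⟨?_, ?_⟩, by rw [pow_succ, Int.mul_ediv_cancel _ two_ne_zero]⟩
  · obtain ⟨a, b, c, d, hcd, hW⟩ := exists_abs_butterflyWalsh_eq t hk hgcd hα0 hα1
    exact ⟨a, b, c, d, hcd, hW.symm⟩
  · rintro _ ⟨a, b, c, d, hcd, rfl⟩
    exact abs_butterflyWalsh_le t hk hgcd hα0 hα1 hcd a b
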